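/- Let Λ be a normal subgroup of the free group F₂. Then girth([Λ,Λ]) ≥ 3·girth(Λ), where girth(Λ) = min{ℓ(w) : w ∈ Λ, w ≠ e}. -/

import Mathlib

/-- The girth of a subgroup of `F₂`: the minimal word length of a nontrivial element,
`⊤` for the trivial subgroup. -/
noncomputable def subgroupGirth (Λ : Subgroup (FreeGroup (Fin 2))) : ℕ∞ :=
  ⨅ w : {w : FreeGroup (Fin 2) // w ∈ Λ ∧ w ≠ 1}, ((w : FreeGroup (Fin 2)).norm : ℕ∞)

namespace GirthComm

open FreeGroup hiding map_mul map_inv map_one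

abbrev F := FreeGroup (Fin 2)
abbrev Wd := List (Fin 2 × Bool)

/-- common prefix length -/
def cp : Wd → Wd → ℕ
  | [], _ => 0
  | _ :: _, [] => 0
  | a :: A, b :: B => if a = b then cp A B + 1 else 0

theorem cp_ultra : ∀ A B D : Wd, min (cp A D) (cp B D) ≤ cp A B
  | [], B, D => by simp [cp]
  | a :: A, [], [] => by simp [cp]
  | a :: A, [], d :: D => by simp [cp]
  | a :: A, b :: B, [] => by simp [cp]
  | a :: A, b :: B, d :: D => by
    have := cp_ultra A B D
    simp only [cp]
    split_ifs <;> first | omega | (exfalso; simp_all)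

theorem red_tail {a : Fin 2 × Bool} {A : Wd} (h : IsReduced (a :: A)) : IsReduced A :=
  h.infix ⟨[a], [], by simp⟩

theorem invRev_red {A : Wd} (h : IsReduced A) : IsReduced (invRev A) := by
  rw [isReduced_iff_reduce_eq] at *
  rw [reduce_invRev, h]

theorem norm_red {A : Wd} (h : IsReduced A) : (mk A : F).norm = A.length := by
  rw [FreeGroup.norm, toWord_mk, h.reduce_eq]

theorem norm_cp : ∀ A B : Wd, IsReduced A → IsReduced B →
    ((mk A)⁻¹ * mk B : F).norm + 2 * cp A B = A.length + B.length
  | [], B, _, hB => by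
    have : (mk [] : F) = 1 := rfl
    simp [cp, this, norm_red hB]
  | a :: A, [], hA, _ => by
    have : (mk [] : F) = 1 := rfl
    simp only [this, mul_one, norm_inv_eq, norm_red hA]
    simp [cp]
  | a :: A, b :: B, hA, hB => by
    by_cases hab : a = b
    · subst hab
      have ih := norm_cp A B (red_tail hA) (red_tail hB)
      have e : ∀ X : Wd, (mk (a :: X) : F) = mk [a] * mk X := fun X => by simp [mul_mk]
      have : ((mk (a :: A))⁻¹ * mk (a :: B) : F) = (mk A)⁻¹ * mk B := by
        rw [e A, e B]; group
      rw [this]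
      simp only [cp, if_true, List.length_cons]
      omega
    · rw [inv_mk, mul_mk, norm_red]
      · simp [cp, hab]
      · have h1 := invRev_red hA
        have h2 : invRev (a :: A) = invRev A ++ [(a.1, !a.2)] := by simp [invRev]
        rw [h2] at h1 ⊢
        have := IsReduced.append_overlap (L₁ := invRev A) (L₂ := [(a.1, !a.2)]) (L₃ := b :: B) h1
          (by
            simp only [List.singleton_append]
            rw [isReduced_cons_cons]
            refine ⟨fun h => ?_, hB⟩
            rcases a with ⟨a1, a2⟩
            rcases b with ⟨b1, b2⟩
            simp only at h
            subst h
            cases a2 <;> cases b2 <;> simp_all) (by simp)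
        exact this

theorem four_point (x y z : F) :
    (x⁻¹ * y).norm + z.norm ≤
      max (x.norm + (y⁻¹ * z).norm) (y.norm + (x⁻¹ * z).norm) := by
  have h1 := norm_cp _ _ (isReduced_toWord (x := x)) (isReduced_toWord (x := y))
  have h2 := norm_cp _ _ (isReduced_toWord (x := y)) (isReduced_toWord (x := z))
  have h3 := norm_cp _ _ (isReduced_toWord (x := x)) (isReduced_toWord (x := z))
  have h4 := cp_ultra x.toWord y.toWord z.toWord
  simp only [mk_toWord] at h1 h2 h3
  simp only [FreeGroup.norm] at *
  omega

/-- algebraic core -/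
theorem core (Λ : Subgroup F) (hΛ : Λ.Normal) (g : ℕ) (hg : ∀ u ∈ Λ, u ≠ 1 → g ≤ u.norm)
    (n : ℕ) (ih : ∀ u ∈ ⁅Λ, Λ⁆, u ≠ 1 → u.norm < n → 3 * g ≤ u.norm)
    (a b P Q R S : F) (ha : a.norm ≤ 1) (hb : b.norm ≤ 1)
    (hn : P.norm + Q.norm + R.norm + S.norm + 4 ≤ n)
    (h1 : P * b * Q ∈ Λ) (h2 : Q * a⁻¹ * R ∈ Λ)
    (hw : a * P * b * Q * a⁻¹ * R * b⁻¹ * S ∈ ⁅Λ, Λ⁆)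
    (hw1 : a * P * b * Q * a⁻¹ * R * b⁻¹ * S ≠ 1) : 3 * g ≤ n := by
  set y := Q * a⁻¹ * R with hy
  set z := Q * P * b with hz
  have hzΛ : z ∈ Λ := by
    have := hΛ.conj_mem _ h1 Q
    rwa [show Q * (P * b * Q) * Q⁻¹ = z by rw [hz]; group] at this
  have key : a * P * b * Q * a⁻¹ * R * b⁻¹ * S
      = R * (y⁻¹ * z * y * z⁻¹) * R⁻¹ * (R * Q * P * S) := by
    rw [hy, hz]; group
  have hc : R * (y⁻¹ * z * y * z⁻¹) * R⁻¹ ∈ ⁅Λ, Λ⁆ := by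
    have hN : (⁅Λ, Λ⁆ : Subgroup F).Normal := inferInstance
    apply hN.conj_mem
    have := Subgroup.commutator_mem_commutator (Λ.inv_mem h2) hzΛ
    rw [commutatorElement_def, inv_inv] at this
    exact this
  have hD : R * Q * P * S ∈ ⁅Λ, Λ⁆ := by
    rw [key] at hw
    exact (Subgroup.mul_mem_cancel_left _ hc).1 hw
  have t (u v : F) := norm_mul_le u v
  by_cases hD1 : R * Q * P * S = 1
  · rw [key, hD1, mul_one] at hw1
    have hcomm : y⁻¹ * z * y * z⁻¹ ≠ 1 := by
      intro h; apply hw1; rw [h]; group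
    have hS : S = (R * Q * P)⁻¹ := by
      rw [eq_inv_iff_mul_eq_one]
      have := congrArg (fun u => S * u * S⁻¹) hD1
      simpa [mul_assoc] using this
    have hy1 : y ≠ 1 := by rintro h; apply hcomm; rw [h]; group
    have hz1 : z ≠ 1 := by rintro h; apply hcomm; rw [h]; group
    -- conjugate of y
    have k1 : g ≤ (R * Q).norm + 1 := by
      have m : R * Q * a⁻¹ ∈ Λ := by
        have := hΛ.conj_mem _ h2 R
        rwa [show R * (Q * a⁻¹ * R) * R⁻¹ = R * Q * a⁻¹ by group] at this
      have ne : R * Q * a⁻¹ ≠ 1 := by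
        intro h; apply hy1
        rw [show y = R⁻¹ * (R * Q * a⁻¹) * R by rw [hy]; group, h]; group
      have := hg _ m ne
      have := t (R * Q) a⁻¹
      rw [norm_inv_eq] at this
      omega
    have k2 : g ≤ (Q * P).norm + 1 := by
      have := hg _ hzΛ hz1
      have := t (Q * P) b
      rw [← hz] at this
      omega
    have k3 : g ≤ R.norm + P.norm + 2 := by
      have m : y⁻¹ * z ∈ Λ := Λ.mul_mem (Λ.inv_mem h2) hzΛ
      have ne : y⁻¹ * z ≠ 1 := by
        intro h; apply hcomm
        have : z = y := by rw [inv_mul_eq_one] at h; exact h.symm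
        rw [this]; group
      have h0 := hg _ m ne
      rw [show y⁻¹ * z = R⁻¹ * a * P * b by rw [hy, hz]; group] at h0
      have h3 := t (R⁻¹ * a * P) b
      have h4 := t (R⁻¹ * a) P
      have h5 := t R⁻¹ a
      rw [norm_inv_eq] at h5
      omega
    have k4 : g ≤ S.norm + Q.norm + 2 := by
      have m : R * (z * y) * R⁻¹ ∈ Λ := hΛ.conj_mem _ (Λ.mul_mem hzΛ h2) R
      have ne : R * (z * y) * R⁻¹ ≠ 1 := by
        intro h; apply hcomm
        have : z * y = 1 := by
          rw [show z * y = R⁻¹ * (R * (z * y) * R⁻¹) * R by group, h]; group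
        have : z = y⁻¹ := eq_inv_of_mul_eq_one_left this
        rw [this]; group
      have h0 := hg _ m ne
      rw [show R * (z * y) * R⁻¹ = S⁻¹ * b * Q * a⁻¹ by rw [hy, hz, hS]; group] at h0
      have h3 := t (S⁻¹ * b * Q) a⁻¹
      have h4 := t (S⁻¹ * b) Q
      have h5 := t S⁻¹ b
      rw [norm_inv_eq] at h5 h3
      omega
    have f := four_point R⁻¹ Q (Q * P)
    rw [inv_inv, norm_inv_eq, show Q⁻¹ * (Q * P) = P by group,
      show R * (Q * P) = S⁻¹ by rw [hS]; group, norm_inv_eq] at f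
    omega
  · have h3 := t (R * Q * P) S
    have h4 := t (R * Q) P
    have h5 := t R Q
    have := ih _ hD hD1 (by omega)
    omega

section flow

open Classical in
/-- the height function step -/
noncomputable def stp {G : Type} [Group G] (q : Fin 2 → G) (v0 : G) (x0 : Fin 2) (x : Fin 2) :
    Equiv.Perm (G × ℤ) where
  toFun p := (q x * p.1, p.2 + if p.1 = v0 ∧ x = x0 then 1 else 0)
  invFun p := ((q x)⁻¹ * p.1, p.2 - if (q x)⁻¹ * p.1 = v0 ∧ x = x0 then 1 else 0)
  left_inv p := by simp
  right_inv p := by simp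

variable {G : Type} [Group G] (f : Fin 2 → G) (v0 : G) (x0 : Fin 2)

theorem rho_form (w : F) : ∀ (v : G) , ∃ c : ℤ, ∀ n : ℤ,
    lift (stp f v0 x0) w (v, n) = (lift f w * v, n + c) := by
  induction w using FreeGroup.induction_on with
  | C1 => intro v; exact ⟨0, by simp⟩
  | of x =>
    intro v
    rw [lift_apply_of, lift_apply_of]
    exact ⟨(stp f v0 x0 x (v, 0)).2, fun n => by simp [stp]⟩
  | inv_of x _ =>
    intro v
    rw [map_inv, map_inv, lift_apply_of, lift_apply_of]
    refine ⟨((stp f v0 x0 x).symm (v, 0)).2, fun n => ?_⟩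
    simp [stp, Equiv.Perm.inv_def, Equiv.symm, sub_eq_add_neg]
  | mul x y hx hy =>
    intro v
    obtain ⟨c, hc⟩ := hy v
    obtain ⟨d, hd⟩ := hx (lift f y * v)
    refine ⟨c + d, fun n => ?_⟩
    simp [map_mul, Equiv.Perm.mul_apply, hc, hd, mul_assoc, add_assoc]

theorem rho_comm (Λ : Subgroup F) (h : ∀ u ∈ Λ, lift f u = 1) :
    ∀ w ∈ ⁅Λ, Λ⁆, lift (stp f v0 x0) w = 1 := by
  have : ⁅Λ, Λ⁆ ≤ (lift (stp f v0 x0)).ker := by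
    rw [Subgroup.commutator_le]
    intro u hu w hw
    rw [MonoidHom.mem_ker, map_commutatorElement, commutatorElement_eq_one_iff_mul_comm]
    ext1 ⟨v, n⟩
    obtain ⟨c, hc⟩ := rho_form f v0 x0 u v
    obtain ⟨d, hd⟩ := rho_form f v0 x0 w v
    simp only [h u hu, h w hw, one_mul] at hc hd
    simp only [Equiv.Perm.mul_apply, hc, hd]
    congr 1; ring
  exact fun w hw => this hw

end flow

/-- letter at i -/
def lt (L : Wd) (i : ℕ) : Fin 2 × Bool := L.getD i (0, true)

theorem drop_eq (L : Wd) (i : ℕ) (h : i < L.length) : L.drop i = lt L i :: L.drop (i + 1) := by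
  rw [List.drop_eq_getElem_cons h, lt, List.getD_eq_getElem _ _ h]

theorem mk_drop (L : Wd) (i : ℕ) (h : i < L.length) :
    (mk (L.drop i) : F) = mk [lt L i] * mk (L.drop (i + 1)) := by
  rw [drop_eq L i h, mul_mk]; rfl

def Rev {G : Type} [Group G] (f : Fin 2 → G) (L : Wd) (i j : ℕ) : Prop :=
  (lt L i).1 = (lt L j).1 ∧ (lt L i).2 = !(lt L j).2 ∧
    lift f (mk (L.drop (i + 1))) = lift f (mk (L.drop j)) ∧
    lift f (mk (L.drop i)) = lift f (mk (L.drop (j + 1)))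

theorem Rev.symm {G : Type} [Group G] {f : Fin 2 → G} {L : Wd} {i j : ℕ} (h : Rev f L i j) :
    Rev f L j i := by
  obtain ⟨h1, h2, h3, h4⟩ := h
  exact ⟨h1.symm, by simp [h2], h4.symm, h3.symm⟩

theorem mk_false (x : Fin 2) : (mk [(x, false)] : F) = (of x)⁻¹ := rfl
theorem mk_true (x : Fin 2) : (mk [(x, true)] : F) = of x := rfl

theorem exists_rev {G : Type} [Group G] (f : Fin 2 → G) (L : Wd)
    (hL : ∀ v0 x0, lift (stp f v0 x0) (mk L) = 1) (i : ℕ) (hi : i < L.length) :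
    ∃ j < L.length, Rev f L i j := by
  classical
  set V : ℕ → G := fun i => lift f (mk (L.drop i)) with hV
  have hVs : ∀ i < L.length, V i = lift f (mk [lt L i]) * V (i + 1) := by
    intro i hi; simp only [hV]; rw [mk_drop L i hi, map_mul]
  set x0 := (lt L i).1 with hx0
  obtain ⟨v0, hv0⟩ : ∃ v0, v0 = if (lt L i).2 then V (i + 1) else V i := ⟨_, rfl⟩
  set N : ℕ → ℤ := fun i => (lift (stp f v0 x0) (mk (L.drop i)) (1, 0)).2 with hN
  have hfst : ∀ i, (lift (stp f v0 x0) (mk (L.drop i)) (1, 0)).1 = V i := by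
    intro i
    obtain ⟨c, hc⟩ := rho_form f v0 x0 (mk (L.drop i)) 1
    rw [hc]; simp [hV]
  have N0 : N 0 = 0 := by simp only [hN, List.drop_zero, hL]; rfl
  have Nn : N L.length = 0 := by
    have : (mk [] : F) = 1 := rfl
    simp only [hN, List.drop_length, this, map_one]; rfl
  have step : ∀ k < L.length, N k - N (k + 1) =
      if (lt L k).2 then (if V (k + 1) = v0 ∧ (lt L k).1 = x0 then 1 else 0)
      else -(if V k = v0 ∧ (lt L k).1 = x0 then 1 else 0) := by
    intro k hk
    have hs := hVs k hk
    have h1 := hfst (k + 1)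
    simp only [hN]
    rw [mk_drop L k hk, map_mul, Equiv.Perm.mul_apply]
    generalize lift (stp f v0 x0) (mk (L.drop (k + 1))) (1, 0) = p at *
    rcases hl : lt L k with ⟨x, b⟩
    rw [hl] at hs
    cases b
    · rw [mk_false] at hs ⊢
      simp only [map_inv, lift_apply_of] at hs ⊢
      simp [stp, Equiv.Perm.inv_def, Equiv.symm, hs, h1]
    · rw [mk_true]
      simp [stp, h1]
  have hsum : ∑ k ∈ Finset.range L.length, (N k - N (k + 1)) = 0 := by
    rw [Finset.sum_range_sub', N0, Nn]; rfl
  have hpair : ∃ k < L.length, (lt L k).1 = x0 ∧ (lt L k).2 = !(lt L i).2 ∧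
      (if (lt L k).2 then V (k + 1) else V k) = v0 := by
    by_contra hcon
    push Not at hcon
    cases hb : (lt L i).2
    · rw [hb] at hv0 hcon
      have : ∑ k ∈ Finset.range L.length, (N k - N (k + 1)) < 0 := by
        apply Finset.sum_neg' 
        · intro k hk
          rw [Finset.mem_range] at hk
          rw [step k hk]
          have hc := hcon k hk
          clear hcon step hVs hsum hfst
          clear_value x0 V N
          grind
        · refine ⟨i, by simpa using hi, ?_⟩
          rw [step i hi, hb]
          clear hcon step hVs hsum hfst
          clear_value x0 V N
          grind
      omega
    · rw [hb] at hv0 hcon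
      have : 0 < ∑ k ∈ Finset.range L.length, (N k - N (k + 1)) := by
        apply Finset.sum_pos'
        · intro k hk
          rw [Finset.mem_range] at hk
          rw [step k hk]
          have hc := hcon k hk
          clear hcon step hVs hsum hfst
          clear_value x0 V N
          grind
        · refine ⟨i, by simpa using hi, ?_⟩
          rw [step i hi, hb]
          clear hcon step hVs hsum hfst
          clear_value x0 V N
          grind
      omega
  obtain ⟨k, hk, e1, e2, e3⟩ := hpair
  refine ⟨k, hk, e1.symm, by simp [e2], ?_⟩
  have s1 := hVs i hi
  have s2 := hVs k hk
  change V (i + 1) = V k ∧ V i = V (k + 1)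
  rcases hli : lt L i with ⟨x, b⟩
  rcases hlk : lt L k with ⟨x', b'⟩
  rw [hli] at s1 hv0 e2 hx0
  rw [hlk] at s2 e1 e3 e2
  simp only at e1 e2 hx0 hv0 e3
  have : x' = x := by rw [e1, hx0]
  subst this
  cases b
  · simp only [Bool.not_false] at e2
    subst e2
    simp only [if_true, Bool.false_eq_true, if_false] at hv0 e3
    have e4 : V i = V (k + 1) := by rw [e3, hv0]
    refine ⟨?_, e4⟩
    rw [s2, mk_true, ← e4, s1, mk_false]; simp
  · simp only [Bool.not_true] at e2
    subst e2
    simp only [if_true, Bool.false_eq_true, if_false] at hv0 e3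
    have e4 : V (i + 1) = V k := by rw [e3, hv0]
    refine ⟨e4, ?_⟩
    rw [s1, e4, s2, mk_true, mk_false]; simp

theorem exists_cross {G : Type} [Group G] (f : Fin 2 → G) (L : Wd) (hred : IsReduced L)
    (hne : L ≠ []) (hL : ∀ v0 x0, lift (stp f v0 x0) (mk L) = 1) :
    ∃ i j k l, i < j ∧ j < k ∧ k < l ∧ l < L.length ∧ Rev f L i k ∧ Rev f L j l := by
  classical
  have ex := exists_rev f L hL
  have irr : ∀ i, ¬ Rev f L i i := by
    intro i h
    have := h.2.1
    cases h' : (lt L i).2 <;> simp [h'] at this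
  have hex : ∃ d i, i + d < L.length ∧ Rev f L i (i + d) := by
    obtain ⟨j, hj, h⟩ := ex 0 (List.length_pos_of_ne_nil hne)
    exact ⟨j, 0, by simpa using hj, by simpa using h⟩
  obtain ⟨i, hi, hr⟩ := Nat.find_spec hex
  have hmin : ∀ a b, a ≤ b → b < L.length → Rev f L a b → Nat.find hex ≤ b - a := by
    intro a b hab hb h
    apply Nat.find_min'
    exact ⟨a, by omega, by rwa [show a + (b - a) = b by omega]⟩
  generalize Nat.find hex = d at *
  have hd0 : d ≠ 0 := by rintro rfl; exact irr _ hr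
  have hd1 : d ≠ 1 := by
    rintro rfl
    have h2 : L.drop i = lt L i :: lt L (i + 1) :: L.drop (i + 1 + 1) := by
      rw [drop_eq L i (by omega), drop_eq L (i + 1) hi]
    have h3 : IsReduced (L.drop i) := hred.infix (List.drop_suffix i L).isInfix
    rw [h2, isReduced_cons_cons] at h3
    have h4 := h3.1 hr.1
    have h5 := hr.2.1
    rw [h4] at h5
    cases h' : (lt L (i+1)).2 <;> simp [h'] at h5
  obtain ⟨l, hl, hl'⟩ := ex (i + 1) (by omega)
  have n1 : l ≠ i := by
    rintro rfl
    have := hmin l (l + 1) (by omega) (by omega) hl'.symm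
    omega
  have n2 : l ≠ i + d := by
    rintro rfl
    have := hmin _ _ (by omega) hl hl'
    omega
  have n3 : l ≠ i + 1 := by rintro rfl; exact irr _ hl'
  rcases lt_or_ge l i with h | h
  · exact ⟨l, i, i + 1, i + d, h, by omega, by omega, hi, hl'.symm, hr⟩
  · rcases lt_or_ge l (i + d) with h' | h'
    · have := hmin (i + 1) l (by omega) hl hl'
      omega
    · exact ⟨i, i + 1, i + d, l, by omega, by omega, by omega, hl, hr, hl'⟩

theorem seg (L : Wd) (a b : ℕ) (h : a ≤ b) :
    ∃ p : F, mk (L.drop a) = p * mk (L.drop b) ∧ p.norm ≤ b - a := by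
  refine ⟨mk ((L.drop a).take (b - a)), ?_, ?_⟩
  · rw [mul_mk]
    congr 1
    conv_lhs => rw [← List.take_append_drop (b - a) (L.drop a), List.drop_drop]
    rw [show a + (b - a) = b by omega]
  · refine norm_mk_le.trans ?_
    simp

theorem mk_inv_letter {s t : Fin 2 × Bool} (h1 : s.1 = t.1) (h2 : s.2 = !t.2) :
    (mk [t] : F) = (mk [s])⁻¹ := by
  rcases s with ⟨x, b⟩
  rcases t with ⟨y, c⟩
  simp only at h1 h2
  subst h1 h2
  simp [inv_mk, invRev]

theorem main (Λ : Subgroup F) (hΛ : Λ.Normal) (g : ℕ) (hg : ∀ u ∈ Λ, u ≠ 1 → g ≤ u.norm) :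
    ∀ n : ℕ, ∀ w ∈ ⁅Λ, Λ⁆, w ≠ 1 → w.norm = n → 3 * g ≤ n := by
  intro n
  induction n using Nat.strong_induction_on with
  | _ n IH =>
  intro w hw hw1 hn
  let f : Fin 2 → F ⧸ Λ := fun x => QuotientGroup.mk' Λ (of x)
  have hf : ∀ u : F, lift f u = QuotientGroup.mk' Λ u := by
    intro u
    have : lift f = QuotientGroup.mk' Λ := by ext x; simp [f]
    rw [this]
  have hf1 : ∀ u : F, lift f u = 1 ↔ u ∈ Λ := by
    intro u; rw [hf, QuotientGroup.mk'_apply, QuotientGroup.eq_one_iff]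
  obtain ⟨L, hL⟩ : ∃ L, L = w.toWord := ⟨_, rfl⟩
  have hmk : mk L = w := by rw [hL, mk_toWord]
  have hlen : L.length = n := by rw [hL, ← hn]; rfl
  obtain ⟨i, j, k, l, hij, hjk, hkl, hl, r1, r2⟩ := exists_cross f L (hL ▸ isReduced_toWord)
    (by rintro rfl; exact hw1 (by rw [← hmk]; rfl))
    (fun v0 x0 => by
      rw [hmk]
      exact rho_comm f v0 x0 Λ (fun u hu => (hf1 u).2 hu) w hw)
  obtain ⟨X, eX, nX⟩ := seg L 0 i (by omega)
  obtain ⟨P, eP, nP⟩ := seg L (i + 1) j (by omega)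
  obtain ⟨Q, eQ, nQ⟩ := seg L (j + 1) k (by omega)
  obtain ⟨R, eR, nR⟩ := seg L (k + 1) l (by omega)
  obtain ⟨S, eS, nS⟩ := seg L (l + 1) L.length (by omega)
  have e0 : (mk (L.drop L.length) : F) = 1 := by simp; rfl
  rw [e0, mul_one] at eS
  rw [List.drop_zero, hmk] at eX
  have ei := mk_drop L i (by omega)
  have ej := mk_drop L j (by omega)
  have ek := mk_drop L k (by omega)
  have el := mk_drop L l (by omega)
  have i1 := mk_inv_letter r1.1 r1.2.1
  have i2 := mk_inv_letter r2.1 r2.2.1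
  have na : (mk [lt L i] : F).norm ≤ 1 := norm_mk_le
  have nb : (mk [lt L j] : F).norm ≤ 1 := norm_mk_le
  have c1 := r1.2.2.1
  have c2 := r2.2.2.1
  rw [i1] at ek
  rw [i2] at el
  generalize (mk [lt L i] : F) = a at *
  generalize (mk [lt L j] : F) = b at *
  rw [eP, ej, eQ, map_mul, map_mul, map_mul] at c1
  rw [eQ, ek, eR, map_mul, map_mul, map_mul] at c2
  have m1 : P * b * Q ∈ Λ := by
    rw [← hf1, map_mul, map_mul]
    simpa [← mul_assoc] using c1
  have m2 : Q * a⁻¹ * R ∈ Λ := by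
    rw [← hf1, map_mul, map_mul]
    simpa [← mul_assoc] using c2
  have hweq : w = X * (a * P * b * Q * a⁻¹ * R * b⁻¹ * (S * X)) * X⁻¹ := by
    rw [eX, ei, eP, ej, eQ, ek, eR, el, eS]; group
  have hN : (⁅Λ, Λ⁆ : Subgroup F).Normal := inferInstance
  have nSX := norm_mul_le S X
  refine core Λ hΛ g hg n (fun u hu hu1 hun => IH _ hun u hu hu1 rfl) a b P Q R (S * X) na nb
    (by omega) m1 m2 ?_ ?_
  · have := hN.conj_mem _ hw X⁻¹
    rw [hweq] at this
    convert this using 1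
    group
  · intro h
    apply hw1
    rw [hweq, h]; group

end GirthComm

theorem girth_commutator_ge_three_mul (Λ : Subgroup (FreeGroup (Fin 2))) (hΛ : Λ.Normal) :
    3 * subgroupGirth Λ ≤ subgroupGirth ⁅Λ, Λ⁆ := by
  have hle : ∀ u ∈ Λ, u ≠ 1 → subgroupGirth Λ ≤ (u.norm : ℕ∞) := fun u hu hu1 =>
    iInf_le (fun w : {w : FreeGroup (Fin 2) // w ∈ Λ ∧ w ≠ 1} =>
      ((w : FreeGroup (Fin 2)).norm : ℕ∞)) ⟨u, hu, hu1⟩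
  conv_rhs => rw [subgroupGirth]
  refine le_iInf ?_
  rintro ⟨w, hw, hw1⟩
  have hwΛ : w ∈ Λ := Subgroup.commutator_le_left Λ Λ hw
  have hlt : subgroupGirth Λ ≠ ⊤ := by
    intro h
    have := hle w hwΛ hw1
    rw [h] at this
    simp at this
  obtain ⟨g, hg⟩ := ENat.ne_top_iff_exists.1 hlt
  rw [← hg] at hle ⊢
  have := GirthComm.main Λ hΛ g (fun u hu hu1 => by exact_mod_cast hle u hu hu1) _ w hw hw1 rfl
  exact_mod_cast this
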